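/- There exists a language that belongs to both trPCCFL and traceCFL but does not belong to shuffleCFL. -/

import Mathlib

/-- `IsInterleaving w v u` means `u` is an interleaving of `w` and `v`. -/
inductive IsInterleaving {α : Type} : List α → List α → List α → Prop
  | nil : IsInterleaving [] [] []
  | left {a : α} {w v u : List α} : IsInterleaving w v u → IsInterleaving (a :: w) v (a :: u)
  | right {a : α} {w v u : List α} : IsInterleaving w v u → IsInterleaving w (a :: v) (a :: u)

/-- Shuffle of two languages. -/
def shuffleLang {α : Type} (L K : Set (List α)) : Set (List α) :=
  {u | ∃ w ∈ L, ∃ v ∈ K, IsInterleaving w v u}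

/-- A partially-commutative context-free grammar in Greibach form. -/
structure PCGrammar (α : Type) : Type 1 where
  V : Type
  finV : Finite V
  start : V
  prods : Set (V × α × List V)
  finP : prods.Finite
  indep : V → V → Prop
  indep_symm : ∀ {X Y : V}, indep X Y → indep Y X
  indep_irrefl : ∀ X : V, ¬ indep X X

/-- `PCDerives G γ w` : configuration `γ` derives the empty configuration producing word `w`,
using production steps (at the head) and swap steps of independent adjacent nonterminals. -/
inductive PCDerives {α : Type} (G : PCGrammar α) : List G.V → List α → Prop
  | nil : PCDerives G [] []
  | prod {X : G.V} {a : α} {γ β : List G.V} {w : List α} :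
      (X, a, γ) ∈ G.prods → PCDerives G (γ ++ β) w → PCDerives G (X :: β) (a :: w)
  | swap {η β : List G.V} {X Y : G.V} {w : List α} :
      G.indep X Y → PCDerives G (η ++ Y :: X :: β) w → PCDerives G (η ++ X :: Y :: β) w

/-- The language generated by a PC-grammar. -/
def PCGrammar.lang {α : Type} (G : PCGrammar α) : Set (List α) :=
  {w | PCDerives G [G.start] w}

/-- The class of partially-commutative context-free languages. -/
def IsPCCFL {α : Type} (L : Set (List α)) : Prop :=
  ∃ G : PCGrammar α, G.lang = L

/-- The dependence relation (complement of independence) is transitive. -/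
def PCGrammar.depTransitive {α : Type} (G : PCGrammar α) : Prop :=
  ∀ X Y Z : G.V, ¬ G.indep X Y → ¬ G.indep Y Z → ¬ G.indep X Z

/-- The subclass of PCCFL given by grammars with transitive dependence. -/
def IsTrPCCFL {α : Type} (L : Set (List α)) : Prop :=
  ∃ G : PCGrammar α, G.depTransitive ∧ G.lang = L

/-- Terms of a PA-grammar (shuffle context-free grammar). -/
inductive PATerm (V : Type) : Type
  | eps : PATerm V
  | var (X : V) : PATerm V
  | seq (t u : PATerm V) : PATerm V
  | par (t u : PATerm V) : PATerm V

/-- Structural equivalence of PA-terms: associativity of both compositions,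
commutativity of parallel composition, and neutrality of the empty term. -/
inductive PAEq {V : Type} : PATerm V → PATerm V → Prop
  | refl (t : PATerm V) : PAEq t t
  | symm {t u : PATerm V} : PAEq t u → PAEq u t
  | trans {t u v : PATerm V} : PAEq t u → PAEq u v → PAEq t v
  | seq_assoc (t u v : PATerm V) : PAEq ((t.seq u).seq v) (t.seq (u.seq v))
  | par_assoc (t u v : PATerm V) : PAEq ((t.par u).par v) (t.par (u.par v))
  | par_comm (t u : PATerm V) : PAEq (t.par u) (u.par t)
  | seq_eps_left (t : PATerm V) : PAEq (PATerm.eps.seq t) t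
  | seq_eps_right (t : PATerm V) : PAEq (t.seq PATerm.eps) t
  | par_eps (t : PATerm V) : PAEq (t.par PATerm.eps) t
  | seq_congr {t t' u u' : PATerm V} : PAEq t t' → PAEq u u' → PAEq (t.seq u) (t'.seq u')
  | par_congr {t t' u u' : PATerm V} : PAEq t t' → PAEq u u' → PAEq (t.par u) (t'.par u')

/-- Single steps of a PA-grammar with production set `P`. -/
inductive PAStep {V α : Type} (P : Set (V × α × PATerm V)) : PATerm V → α → PATerm V → Prop
  | prod {X : V} {a : α} {t : PATerm V} : (X, a, t) ∈ P → PAStep P (PATerm.var X) a t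
  | seq_left {t t' u : PATerm V} {a : α} : PAStep P t a t' → PAStep P (t.seq u) a (t'.seq u)
  | par_left {t t' u : PATerm V} {a : α} : PAStep P t a t' → PAStep P (t.par u) a (t'.par u)
  | par_right {t u u' : PATerm V} {a : α} : PAStep P u a u' → PAStep P (t.par u) a (t.par u')

/-- `PAGen P t w` : term `t` derives the empty term producing word `w`
(terms are considered up to structural equivalence). -/
inductive PAGen {V α : Type} (P : Set (V × α × PATerm V)) : PATerm V → List α → Prop
  | done : PAGen P PATerm.eps []
  | eqv {t t' : PATerm V} {w : List α} : PAEq t t' → PAGen P t' w → PAGen P t w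
  | step {t t' : PATerm V} {a : α} {w : List α} :
      PAStep P t a t' → PAGen P t' w → PAGen P t (a :: w)

/-- A PA-grammar (shuffle context-free grammar). -/
structure PAGrammar (α : Type) : Type 1 where
  V : Type
  finV : Finite V
  start : V
  prods : Set (V × α × PATerm V)
  finP : prods.Finite

/-- The language generated by a PA-grammar. -/
def PAGrammar.lang {α : Type} (G : PAGrammar α) : Set (List α) :=
  {w | PAGen G.prods (PATerm.var G.start) w}

/-- The class of languages of PA-grammars (context-free grammars with shuffle). -/
def IsShuffleCFL {α : Type} (L : Set (List α)) : Prop :=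
  ∃ G : PAGrammar α, G.lang = L

/-- A single swap of two adjacent letters independent according to `J`. -/
inductive AdjSwap {α : Type} (J : α → α → Prop) : List α → List α → Prop
  | swap (x y : List α) {a b : α} : J a b → AdjSwap J (x ++ a :: b :: y) (x ++ b :: a :: y)

/-- Trace equivalence: finitely many swaps of adjacent independent letters. -/
def TraceEquiv {α : Type} (J : α → α → Prop) : List α → List α → Prop :=
  Relation.ReflTransGen (AdjSwap J)

/-- Trace closure of a language with respect to letter-independence `J`. -/
def traceClosure {α : Type} (J : α → α → Prop) (L : Set (List α)) : Set (List α) :=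
  {w | ∃ v ∈ L, TraceEquiv J v w}

/-- The class of trace closures of context-free languages. -/
def IsTraceCFL {α : Type} (L : Set (List α)) : Prop :=
  ∃ J : α → α → Prop, (∀ a b, J a b → J b a) ∧ (∀ a, ¬ J a a) ∧
    ∃ L₀ : Language α, L₀.IsContextFree ∧ traceClosure J L₀ = L

/-- `listPow s m` is the word `s^m`. -/
def listPow {α : Type} (s : List α) (m : ℕ) : List α :=
  (List.replicate m s).flatten

/-- The shuffle-pumping condition. -/
def ShufflePumping {α : Type} (L : Set (List α)) : Prop :=
  ∃ N : ℕ, ∀ w ∈ L, w.length > N →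
    ∃ x y z s t : List α,
      (∃ yt u : List α, IsInterleaving y t yt ∧ IsInterleaving (s ++ yt) z u ∧ w = x ++ u) ∧
      1 ≤ s.length ∧ (s ++ y ++ t).length ≤ N ∧
      ∀ m : ℕ, x ++ listPow s m ++ y ++ listPow t m ++ z ∈ L

/-- The concatenation-pumping condition. -/
def ConcatPumping {α : Type} (L : Set (List α)) : Prop :=
  ∃ N : ℕ, ∀ w ∈ L, w.length > N →
    ∃ x y z s t : List α,
      w = x ++ y ++ z ∧
      1 ≤ (s ++ t).length ∧ (s ++ t).length ≤ N ∧
      ∀ m : ℕ, x ++ listPow s m ++ y ++ listPow t m ++ z ∈ L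

/-! ### Derivation trees -/

inductive Lt : Type
  | s | a | b | c | d | g
  deriving DecidableEq

theorem finite_Lt : Finite Lt :=
  Set.finite_univ_iff.1 (Set.Finite.subset
    (List.finite_toSet [Lt.s, Lt.a, Lt.b, Lt.c, Lt.d, Lt.g])
    (fun x _ => by cases x <;> simp))

inductive DT (V α : Type) : Type
  | eps : DT V α
  | seq (t u : DT V α) : DT V α
  | par (t u : DT V α) : DT V α
  | node (X : V) (a : α) (t : DT V α) : DT V α

namespace DT
variable {V α : Type}

def Lin : DT V α → List α → Prop
  | eps, w => w = []
  | seq t u, w => ∃ w1 w2, Lin t w1 ∧ Lin u w2 ∧ w = w1 ++ w2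
  | par t u, w => ∃ w1 w2, Lin t w1 ∧ Lin u w2 ∧ IsInterleaving w1 w2 w
  | node _ a t, w => ∃ w1, Lin t w1 ∧ w = a :: w1

def count [DecidableEq α] (x : α) : DT V α → ℕ
  | eps => 0
  | seq t u => count x t + count x u
  | par t u => count x t + count x u
  | node _ a t => (if a = x then 1 else 0) + count x t

def width : DT V α → ℕ
  | eps => 0
  | seq t u => width t + width u
  | par t u => width t + width u
  | node _ _ _ => 1

def sz : DT V α → ℕ
  | eps => 0
  | seq t u => sz t + sz u
  | par t u => sz t + sz u
  | node _ _ t => sz t + 1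

def Bd (r : ℕ) : DT V α → Prop
  | eps => True
  | seq t u => width t + width u ≤ r ∧ Bd r t ∧ Bd r u
  | par t u => width t + width u ≤ r ∧ Bd r t ∧ Bd r u
  | node _ _ t => 1 ≤ r ∧ Bd r t

theorem Bd.width_le {r : ℕ} {T : DT V α} (h : Bd r T) : width T ≤ r := by
  cases T <;> simp_all [Bd, width]

end DT

open DT

theorem inter_nil_right {α : Type} (w : List α) : IsInterleaving w [] w := by
  induction w with
  | nil => exact .nil
  | cons a w ih => exact .left ih

theorem inter_nil_left {α : Type} (w : List α) : IsInterleaving [] w w := by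
  induction w with
  | nil => exact .nil
  | cons a w ih => exact .right ih

theorem inter_symm {α : Type} {u v w : List α} (h : IsInterleaving u v w) :
    IsInterleaving v u w := by
  induction h with
  | nil => exact .nil
  | left _ ih => exact .right ih
  | right _ ih => exact .left ih

theorem inter_nil_right_eq {α : Type} {u w : List α} (h : IsInterleaving u [] w) : w = u := by
  generalize hv : ([] : List α) = v at h
  induction h with
  | nil => rfl
  | left _ ih => rw [ih hv]
  | right _ _ => cases hv

theorem inter_nil_left_eq {α : Type} {u w : List α} (h : IsInterleaving [] u w) : w = u :=
  inter_nil_right_eq (inter_symm h)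

theorem inter_assoc {α : Type} {p r w : List α} (h : IsInterleaving p r w) :
    ∀ {u v : List α}, IsInterleaving u v p →
      ∃ q, IsInterleaving v r q ∧ IsInterleaving u q w := by
  induction h with
  | nil =>
    intro u v h'
    cases h'
    exact ⟨[], .nil, .nil⟩
  | left _ ih =>
    intro u v h'
    cases h' with
    | left h' =>
      obtain ⟨q, h1, h2⟩ := ih h'
      exact ⟨q, h1, .left h2⟩
    | right h' =>
      obtain ⟨q, h1, h2⟩ := ih h'
      exact ⟨_, .left h1, .right h2⟩
  | right _ ih =>
    intro u v h'
    obtain ⟨q, h1, h2⟩ := ih h'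
    exact ⟨_, .right h1, .right h2⟩

theorem inter_assoc' {α : Type} {u q w v r : List α} (h1 : IsInterleaving v r q)
    (h : IsInterleaving u q w) :
    ∃ p, IsInterleaving u v p ∧ IsInterleaving p r w := by
  obtain ⟨p, h3, h4⟩ := inter_assoc (inter_symm h) (inter_symm h1)
  exact ⟨p, inter_symm h3, inter_symm h4⟩

theorem inter_append {α : Type} (u v : List α) : IsInterleaving u v (u ++ v) := by
  induction u with
  | nil => exact inter_nil_left v
  | cons a u ih => exact .left ih

theorem inter_append_left {α : Type} (p : List α) {u v w : List α} (h : IsInterleaving u v w) :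
    IsInterleaving (p ++ u) v (p ++ w) := by
  induction p with
  | nil => exact h
  | cons a u ih => exact .left ih

theorem inter_append_right {α : Type} (p : List α) {u v w : List α} (h : IsInterleaving u v w) :
    IsInterleaving u (p ++ v) (p ++ w) := by
  induction p with
  | nil => exact h
  | cons a u ih => exact .right ih

theorem inter_count {α : Type} [DecidableEq α] (x : α) {u v w : List α}
    (h : IsInterleaving u v w) : w.count x = u.count x + v.count x := by
  induction h with
  | nil => rfl
  | left _ ih => simp only [List.count_cons, ih]; omega
  | right _ ih => simp only [List.count_cons, ih]; omega

theorem inter_sublist_left {α : Type} {u v w : List α}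
    (h : IsInterleaving u v w) : u.Sublist w := by
  induction h with
  | nil => exact .slnil
  | left _ ih => exact ih.cons_cons _
  | right _ ih => exact ih.cons _

theorem inter_sublist_right {α : Type} {u v w : List α}
    (h : IsInterleaving u v w) : v.Sublist w := inter_sublist_left (inter_symm h)

/-- derivation trees of a term -/
inductive Der {V α : Type} (P : Set (V × α × PATerm V)) : PATerm V → DT V α → Prop
  | eps : Der P PATerm.eps DT.eps
  | seq {t u T U} : Der P t T → Der P u U → Der P (t.seq u) (T.seq U)
  | par {t u T U} : Der P t T → Der P u U → Der P (t.par u) (T.par U)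
  | node {X a t T} : (X, a, t) ∈ P → Der P t T → Der P (PATerm.var X) (DT.node X a T)

def Sem {V α : Type} (P : Set (V × α × PATerm V)) (t : PATerm V) (w : List α) : Prop :=
  ∃ T, Der P t T ∧ Lin T w

section sem
variable {V α : Type} {P : Set (V × α × PATerm V)}

theorem sem_eps {w : List α} : Sem P PATerm.eps w ↔ w = [] := by
  constructor
  · rintro ⟨T, h, h'⟩
    cases h
    exact h'
  · rintro rfl
    exact ⟨_, .eps, rfl⟩

theorem sem_seq {t u : PATerm V} {w : List α} :
    Sem P (t.seq u) w ↔ ∃ w1 w2, Sem P t w1 ∧ Sem P u w2 ∧ w = w1 ++ w2 := by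
  constructor
  · rintro ⟨T, h, h'⟩
    cases h with
    | seq h1 h2 =>
      obtain ⟨w1, w2, a1, a2, e⟩ := h'
      exact ⟨w1, w2, ⟨_, h1, a1⟩, ⟨_, h2, a2⟩, e⟩
  · rintro ⟨w1, w2, ⟨_, h1, a1⟩, ⟨_, h2, a2⟩, e⟩
    exact ⟨_, .seq h1 h2, w1, w2, a1, a2, e⟩

theorem sem_par {t u : PATerm V} {w : List α} :
    Sem P (t.par u) w ↔ ∃ w1 w2, Sem P t w1 ∧ Sem P u w2 ∧ IsInterleaving w1 w2 w := by
  constructor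
  · rintro ⟨T, h, h'⟩
    cases h with
    | par h1 h2 =>
      obtain ⟨w1, w2, a1, a2, e⟩ := h'
      exact ⟨w1, w2, ⟨_, h1, a1⟩, ⟨_, h2, a2⟩, e⟩
  · rintro ⟨w1, w2, ⟨_, h1, a1⟩, ⟨_, h2, a2⟩, e⟩
    exact ⟨_, .par h1 h2, w1, w2, a1, a2, e⟩

theorem sem_eq {t u : PATerm V} (h : PAEq t u) : ∀ w : List α, Sem P t w ↔ Sem P u w := by
  induction h with
  | refl t => intro w; rfl
  | symm _ ih => intro w; exact (ih w).symm
  | trans _ _ ih1 ih2 => intro w; exact (ih1 w).trans (ih2 w)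
  | seq_assoc t u v =>
    intro w
    simp only [sem_seq]
    constructor
    · rintro ⟨_, w3, ⟨w1, w2, h1, h2, rfl⟩, h3, rfl⟩
      exact ⟨w1, _, h1, ⟨w2, w3, h2, h3, rfl⟩, by simp⟩
    · rintro ⟨w1, _, h1, ⟨w2, w3, h2, h3, rfl⟩, rfl⟩
      exact ⟨_, w3, ⟨w1, w2, h1, h2, rfl⟩, h3, by simp⟩
  | par_assoc t u v =>
    intro w
    simp only [sem_par]
    constructor
    · rintro ⟨_, w3, ⟨w1, w2, h1, h2, i1⟩, h3, i2⟩
      obtain ⟨q, i3, i4⟩ := inter_assoc i2 i1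
      exact ⟨w1, _, h1, ⟨w2, w3, h2, h3, i3⟩, i4⟩
    · rintro ⟨w1, _, h1, ⟨w2, w3, h2, h3, i1⟩, i2⟩
      obtain ⟨q, i3, i4⟩ := inter_assoc' i1 i2
      exact ⟨_, w3, ⟨w1, w2, h1, h2, i3⟩, h3, i4⟩
  | par_comm t u =>
    intro w
    simp only [sem_par]
    constructor
    · rintro ⟨w1, w2, h1, h2, i⟩
      exact ⟨w2, w1, h2, h1, inter_symm i⟩
    · rintro ⟨w1, w2, h1, h2, i⟩
      exact ⟨w2, w1, h2, h1, inter_symm i⟩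
  | seq_eps_left t => intro w; simp [sem_seq, sem_eps]
  | seq_eps_right t => intro w; simp [sem_seq, sem_eps]
  | par_eps t =>
    intro w
    simp only [sem_par, sem_eps]
    constructor
    · rintro ⟨w1, w2, h1, rfl, i⟩
      rw [inter_nil_right_eq i]
      exact h1
    · intro h
      exact ⟨w, [], h, rfl, inter_nil_right w⟩
  | seq_congr _ _ ih1 ih2 => intro w; simp only [sem_seq, ih1, ih2]
  | par_congr _ _ ih1 ih2 => intro w; simp only [sem_par, ih1, ih2]

theorem sem_step {t t' : PATerm V} {a : α} (h : PAStep P t a t') :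
    ∀ w : List α, Sem P t' w → Sem P t (a :: w) := by
  induction h with
  | prod h =>
    rintro w ⟨T, h1, h2⟩
    exact ⟨_, .node h h1, w, h2, rfl⟩
  | seq_left _ ih =>
    intro w
    simp only [sem_seq]
    rintro ⟨w1, w2, h1, h2, rfl⟩
    exact ⟨_, w2, ih _ h1, h2, rfl⟩
  | par_left _ ih =>
    intro w
    simp only [sem_par]
    rintro ⟨w1, w2, h1, h2, i⟩
    exact ⟨_, w2, ih _ h1, h2, .left i⟩
  | par_right _ ih =>
    intro w
    simp only [sem_par]
    rintro ⟨w1, w2, h1, h2, i⟩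
    exact ⟨w1, _, h1, ih _ h2, .right i⟩

theorem sem_of_gen {t : PATerm V} {w : List α} (h : PAGen P t w) : Sem P t w := by
  induction h with
  | done => exact sem_eps.2 rfl
  | eqv e _ ih => exact (sem_eq e _).2 ih
  | step s _ ih => exact sem_step s _ ih

theorem gen_seq {t u : PATerm V} {w1 w2 : List α} (h1 : PAGen P t w1) (h2 : PAGen P u w2) :
    PAGen P (t.seq u) (w1 ++ w2) := by
  induction h1 with
  | done => exact .eqv (.seq_eps_left _) h2
  | eqv e _ ih => exact .eqv (.seq_congr e (.refl _)) ih
  | step s _ ih => exact .step (.seq_left s) ih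

theorem gen_par {t u : PATerm V} {w1 w2 : List α} (h1 : PAGen P t w1) (h2 : PAGen P u w2) :
    ∀ w, IsInterleaving w1 w2 w → PAGen P (t.par u) w := by
  induction h1 generalizing u w2 with
  | done =>
    intro w i
    rw [inter_nil_left_eq i]
    exact .eqv (.trans (.par_comm _ _) (.par_eps _)) h2
  | eqv e _ ih =>
    intro w i
    exact .eqv (.par_congr e (.refl _)) (ih h2 w i)
  | @step t t' a w1 s hg ih =>
    induction h2 with
    | done =>
      intro w i
      rw [inter_nil_right_eq i]
      exact .eqv (.par_eps _) (.step s hg)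
    | eqv e _ ih2 =>
      intro w i
      exact .eqv (.par_congr (.refl _) e) (ih2 w i)
    | step s2 hg2 ih2 =>
      intro w i
      cases i with
      | left i => exact .step (.par_left s) (ih (.step s2 hg2) _ i)
      | right i => exact .step (.par_right s2) (ih2 _ i)

theorem gen_of_der {t : PATerm V} {T : DT V α} (h : Der P t T) :
    ∀ w, Lin T w → PAGen P t w := by
  induction h with
  | eps => rintro w rfl; exact .done
  | seq _ _ ih1 ih2 =>
    rintro w ⟨w1, w2, h1, h2, rfl⟩
    exact gen_seq (ih1 _ h1) (ih2 _ h2)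
  | par _ _ ih1 ih2 =>
    rintro w ⟨w1, w2, h1, h2, i⟩
    exact gen_par (ih1 _ h1) (ih2 _ h2) _ i
  | node hp _ ih =>
    rintro w ⟨w1, h1, rfl⟩
    exact .step (.prod hp) (ih _ h1)

end sem

/-! ### Contexts -/

inductive Ctx (V α : Type) : Type
  | hole : Ctx V α
  | seqL (C : Ctx V α) (T : DT V α) : Ctx V α
  | seqR (T : DT V α) (C : Ctx V α) : Ctx V α
  | parL (C : Ctx V α) (T : DT V α) : Ctx V α
  | parR (T : DT V α) (C : Ctx V α) : Ctx V α
  | node (X : V) (a : α) (C : Ctx V α) : Ctx V α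

namespace Ctx
variable {V α : Type}

def fill : Ctx V α → DT V α → DT V α
  | hole, T => T
  | seqL C U, T => (fill C T).seq U
  | seqR U C, T => U.seq (fill C T)
  | parL C U, T => (fill C T).par U
  | parR U C, T => U.par (fill C T)
  | node X a C, T => DT.node X a (fill C T)

def comp : Ctx V α → Ctx V α → Ctx V α
  | hole, D => D
  | seqL C U, D => (comp C D).seqL U
  | seqR U C, D => (comp C D).seqR U
  | parL C U, D => (comp C D).parL U
  | parR U C, D => (comp C D).parR U
  | node X a C, D => (comp C D).node X a

theorem fill_comp (C D : Ctx V α) (T : DT V α) : (C.comp D).fill T = C.fill (D.fill T) := by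
  induction C <;> simp_all [fill, comp]

def cnt [DecidableEq α] (x : α) : Ctx V α → ℕ
  | hole => 0
  | seqL C U => cnt x C + U.count x
  | seqR U C => cnt x C + U.count x
  | parL C U => cnt x C + U.count x
  | parR U C => cnt x C + U.count x
  | node _ a C => cnt x C + (if a = x then 1 else 0)

theorem count_fill [DecidableEq α] (x : α) (C : Ctx V α) (T : DT V α) :
    (C.fill T).count x = C.cnt x + T.count x := by
  induction C <;> simp_all [fill, cnt, DT.count] <;> omega

def Bef [DecidableEq α] (x : α) : Ctx V α → Prop
  | hole => False
  | seqL C _ => Bef x C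
  | seqR U C => Bef x C ∨ 0 < U.count x
  | parL C _ => Bef x C
  | parR _ C => Bef x C
  | node _ a C => Bef x C ∨ a = x

def Aft [DecidableEq α] (x : α) : Ctx V α → Prop
  | hole => False
  | seqL C U => Aft x C ∨ 0 < U.count x
  | seqR _ C => Aft x C
  | parL C _ => Aft x C
  | parR _ C => Aft x C
  | node _ _ C => Aft x C

/-- `x` occurs in a tree parallel to the hole -/
def Prl [DecidableEq α] (x : α) (C : Ctx V α) : Prop :=
  ∃ E F Q, 0 < DT.count x Q ∧ ((∀ T, C.fill T = fill E ((fill F T).par Q)) ∨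
    (∀ T, C.fill T = fill E (Q.par (fill F T))))

theorem Prl.of_fill [DecidableEq α] {x : α} {C D : Ctx V α} (K : Ctx V α)
    (hK : ∀ T, D.fill T = K.fill (C.fill T)) (h : Prl x C) : Prl x D := by
  obtain ⟨E, F, Q, hq, h⟩ := h
  refine ⟨K.comp E, F, Q, hq, ?_⟩
  rcases h with h | h
  · left; intro T; rw [fill_comp, ← h, hK]
  · right; intro T; rw [fill_comp, ← h, hK]

theorem modes [DecidableEq α] (x : α) (C : Ctx V α) (h : 0 < C.cnt x) :
    C.Bef x ∨ C.Aft x ∨ C.Prl x := by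
  induction C with
  | hole => simp [cnt] at h
  | seqL C U ih =>
    by_cases hU : 0 < U.count x
    · right; left; right; exact hU
    · rcases ih (by simp only [cnt] at h; omega) with h | h | h
      · left; exact h
      · right; left; left; exact h
      · right; right; exact h.of_fill (seqL hole U) (fun _ => rfl)
  | seqR U C ih =>
    by_cases hU : 0 < U.count x
    · left; right; exact hU
    · rcases ih (by simp only [cnt] at h; omega) with h | h | h
      · left; left; exact h
      · right; left; exact h
      · right; right; exact h.of_fill (seqR U hole) (fun _ => rfl)
  | parL C U ih =>
    by_cases hU : 0 < U.count x
    · right; right; exact ⟨hole, C, U, hU, Or.inl fun _ => rfl⟩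
    · rcases ih (by simp only [cnt] at h; omega) with h | h | h
      · left; exact h
      · right; left; exact h
      · right; right; exact h.of_fill (parL hole U) (fun _ => rfl)
  | parR U C ih =>
    by_cases hU : 0 < U.count x
    · right; right; exact ⟨hole, C, U, hU, Or.inr fun _ => rfl⟩
    · rcases ih (by simp only [cnt] at h; omega) with h | h | h
      · left; exact h
      · right; left; exact h
      · right; right; exact h.of_fill (parR U hole) (fun _ => rfl)
  | node X a C ih =>
    by_cases hU : a = x
    · left; right; exact hU
    · rcases ih (by simpa [cnt, hU] using h) with h | h | h
      · left; left; exact h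
      · right; left; exact h
      · right; right; exact h.of_fill (node X a hole) (fun _ => rfl)

end Ctx

namespace DT
variable {V α : Type}

theorem lin_exists (T : DT V α) : ∃ w, Lin T w := by
  induction T with
  | eps => exact ⟨[], rfl⟩
  | seq t u h1 h2 =>
    obtain ⟨w1, h1⟩ := h1
    obtain ⟨w2, h2⟩ := h2
    exact ⟨_, w1, w2, h1, h2, rfl⟩
  | par t u h1 h2 =>
    obtain ⟨w1, h1⟩ := h1
    obtain ⟨w2, h2⟩ := h2
    exact ⟨_, w1, w2, h1, h2, inter_append _ _⟩
  | node X a t h =>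
    obtain ⟨w, h⟩ := h
    exact ⟨_, w, h, rfl⟩

theorem lin_count [DecidableEq α] (x : α) (T : DT V α) :
    ∀ w, Lin T w → w.count x = T.count x := by
  induction T with
  | eps => rintro w rfl; rfl
  | seq t u h1 h2 =>
    rintro w ⟨w1, w2, l1, l2, rfl⟩
    simp [count, h1 _ l1, h2 _ l2]
  | par t u h1 h2 =>
    rintro w ⟨w1, w2, l1, l2, i⟩
    simp [count, h1 _ l1, h2 _ l2, inter_count x i]
  | node X a t h =>
    rintro w ⟨w1, l1, rfl⟩
    simp [count, h _ l1, List.count_cons]; omega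

theorem lin_mem [DecidableEq α] {x : α} {T : DT V α} {w : List α} (h : Lin T w)
    (hx : 0 < T.count x) : x ∈ w := by
  rw [← lin_count x T w h] at hx
  exact List.count_pos_iff.1 hx

theorem fill_lin (E : Ctx V α) {A B : DT V α} (h : ∀ w, Lin A w → Lin B w) :
    ∀ w, Lin (E.fill A) w → Lin (E.fill B) w := by
  induction E with
  | hole => exact h
  | seqL C U ih => rintro w ⟨w1, w2, h1, h2, e⟩; exact ⟨w1, w2, ih _ h1, h2, e⟩
  | seqR U C ih => rintro w ⟨w1, w2, h1, h2, e⟩; exact ⟨w1, w2, h1, ih _ h2, e⟩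
  | parL C U ih => rintro w ⟨w1, w2, h1, h2, e⟩; exact ⟨w1, w2, ih _ h1, h2, e⟩
  | parR U C ih => rintro w ⟨w1, w2, h1, h2, e⟩; exact ⟨w1, w2, h1, ih _ h2, e⟩
  | node X a C ih => rintro w ⟨w1, h1, e⟩; exact ⟨w1, ih _ h1, e⟩

theorem lin_par_symm {A B : DT V α} (w : List α) (h : Lin (A.par B) w) : Lin (B.par A) w := by
  obtain ⟨w1, w2, h1, h2, i⟩ := h
  exact ⟨w2, w1, h2, h1, inter_symm i⟩

/-- place the hole contiguously -/
theorem fill_block (E : Ctx V α) :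
    ∃ p q : List α, ∀ T z, Lin T z → Lin (E.fill T) (p ++ z ++ q) := by
  induction E with
  | hole => exact ⟨[], [], fun T z h => by simpa [Ctx.fill] using h⟩
  | seqL C U ih =>
    obtain ⟨p, q, ih⟩ := ih
    obtain ⟨u, hu⟩ := lin_exists U
    exact ⟨p, q ++ u, fun T z h => ⟨_, u, ih T z h, hu, by simp⟩⟩
  | seqR U C ih =>
    obtain ⟨p, q, ih⟩ := ih
    obtain ⟨u, hu⟩ := lin_exists U
    exact ⟨u ++ p, q, fun T z h => ⟨u, _, hu, ih T z h, by simp⟩⟩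
  | parL C U ih =>
    obtain ⟨p, q, ih⟩ := ih
    obtain ⟨u, hu⟩ := lin_exists U
    refine ⟨p, q ++ u, fun T z h => ⟨_, u, ih T z h, hu, ?_⟩⟩
    have := inter_append (p ++ z ++ q) u
    simpa using this
  | parR U C ih =>
    obtain ⟨p, q, ih⟩ := ih
    obtain ⟨u, hu⟩ := lin_exists U
    refine ⟨u ++ p, q, fun T z h => ⟨u, _, hu, ih T z h, ?_⟩⟩
    have := inter_append u (p ++ z ++ q)
    simpa using this
  | node X a C ih =>
    obtain ⟨p, q, ih⟩ := ih
    exact ⟨a :: p, q, fun T z h => ⟨_, ih T z h, by simp⟩⟩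

theorem fill_sub (E : Ctx V α) (T : DT V α) : ∀ w, Lin (E.fill T) w →
    ∃ v, Lin T v ∧ v.Sublist w := by
  induction E with
  | hole => intro w h; exact ⟨w, h, List.Sublist.refl _⟩
  | seqL C U ih =>
    rintro w ⟨w1, w2, h1, h2, rfl⟩
    obtain ⟨v, hv, hs⟩ := ih _ h1
    exact ⟨v, hv, hs.trans (List.sublist_append_left _ _)⟩
  | seqR U C ih =>
    rintro w ⟨w1, w2, h1, h2, rfl⟩
    obtain ⟨v, hv, hs⟩ := ih _ h2
    exact ⟨v, hv, hs.trans (List.sublist_append_right _ _)⟩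
  | parL C U ih =>
    rintro w ⟨w1, w2, h1, h2, i⟩
    obtain ⟨v, hv, hs⟩ := ih _ h1
    exact ⟨v, hv, hs.trans (inter_sublist_left i)⟩
  | parR U C ih =>
    rintro w ⟨w1, w2, h1, h2, i⟩
    obtain ⟨v, hv, hs⟩ := ih _ h2
    exact ⟨v, hv, hs.trans (inter_sublist_right i)⟩
  | node X a C ih =>
    rintro w ⟨w1, h1, rfl⟩
    obtain ⟨v, hv, hs⟩ := ih _ h1
    exact ⟨v, hv, hs.cons _⟩

theorem pair_sub {x y : α} {u v : List α} (h1 : x ∈ u) (h2 : y ∈ v) :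
    [x, y].Sublist (u ++ v) := by
  have := List.Sublist.append (List.singleton_sublist.2 h1) (List.singleton_sublist.2 h2)
  simpa using this

theorem bef_sub [DecidableEq α] {x y : α} (E : Ctx V α) (T : DT V α) (hx : E.Bef x)
    (hy : 0 < T.count y) : ∀ w, Lin (E.fill T) w → [x, y].Sublist w := by
  induction E with
  | hole => exact hx.elim
  | seqL C U ih =>
    rintro w ⟨w1, w2, h1, h2, rfl⟩
    exact (ih hx _ h1).trans (List.sublist_append_left _ _)
  | seqR U C ih =>
    rintro w ⟨w1, w2, h1, h2, rfl⟩
    rcases hx with hx | hx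
    · exact (ih hx _ h2).trans (List.sublist_append_right _ _)
    · exact pair_sub (lin_mem h1 hx) (lin_mem h2 (by rw [Ctx.count_fill]; omega))
  | parL C U ih =>
    rintro w ⟨w1, w2, h1, h2, i⟩
    exact (ih hx _ h1).trans (inter_sublist_left i)
  | parR U C ih =>
    rintro w ⟨w1, w2, h1, h2, i⟩
    exact (ih hx _ h2).trans (inter_sublist_right i)
  | node X a C ih =>
    rintro w ⟨w1, h1, rfl⟩
    rcases hx with hx | hx
    · exact (ih hx _ h1).cons _
    · subst hx
      exact List.Sublist.cons_cons _ (List.singleton_sublist.2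
        (lin_mem h1 (by rw [Ctx.count_fill]; omega)))

theorem aft_sub [DecidableEq α] {x y : α} (E : Ctx V α) (T : DT V α) (hx : E.Aft x)
    (hy : 0 < T.count y) : ∀ w, Lin (E.fill T) w → [y, x].Sublist w := by
  induction E with
  | hole => exact hx.elim
  | seqR U C ih =>
    rintro w ⟨w1, w2, h1, h2, rfl⟩
    exact (ih hx _ h2).trans (List.sublist_append_right _ _)
  | seqL C U ih =>
    rintro w ⟨w1, w2, h1, h2, rfl⟩
    rcases hx with hx | hx
    · exact (ih hx _ h1).trans (List.sublist_append_left _ _)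
    · exact pair_sub (lin_mem h1 (by rw [Ctx.count_fill]; omega)) (lin_mem h2 hx)
  | parL C U ih =>
    rintro w ⟨w1, w2, h1, h2, i⟩
    exact (ih hx _ h1).trans (inter_sublist_left i)
  | parR U C ih =>
    rintro w ⟨w1, w2, h1, h2, i⟩
    exact (ih hx _ h2).trans (inter_sublist_right i)
  | node X a C ih =>
    rintro w ⟨w1, h1, rfl⟩
    exact (ih hx _ h1).cons _

theorem sz_fill (E : Ctx V α) (T : DT V α) : sz T ≤ sz (E.fill T) := by
  induction E <;> simp_all [Ctx.fill, sz] <;> omega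

theorem bd_fill {r : ℕ} (E : Ctx V α) (T : DT V α) (h : Bd r (E.fill T)) : Bd r T := by
  induction E <;> simp_all [Ctx.fill, Bd]

/-- a tree with many `x` has a top node with many `x` -/
theorem top_node [DecidableEq α] (x : α) (m : ℕ) (T : DT V α) (h : width T * m < count x T) :
    ∃ E X a S, T = Ctx.fill E (node X a S) ∧ m < count x (node X a S) := by
  induction T with
  | eps => simp [count] at h
  | seq t u h1 h2 =>
    simp only [count, width, add_mul] at h
    by_cases hh : width t * m < count x t
    · obtain ⟨E, X, a, S, e, hc⟩ := h1 hh
      exact ⟨E.seqL u, X, a, S, by rw [Ctx.fill, ← e], hc⟩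
    · obtain ⟨E, X, a, S, e, hc⟩ := h2 (by omega)
      exact ⟨E.seqR t, X, a, S, by rw [Ctx.fill, ← e], hc⟩
  | par t u h1 h2 =>
    simp only [count, width, add_mul] at h
    by_cases hh : width t * m < count x t
    · obtain ⟨E, X, a, S, e, hc⟩ := h1 hh
      exact ⟨E.parL u, X, a, S, by rw [Ctx.fill, ← e], hc⟩
    · obtain ⟨E, X, a, S, e, hc⟩ := h2 (by omega)
      exact ⟨E.parR t, X, a, S, by rw [Ctx.fill, ← e], hc⟩
  | node X a S ih => exact ⟨.hole, X, a, S, rfl, by simpa [width] using h⟩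

def HasPump [DecidableEq α] (x : α) (T : DT V α) : Prop :=
  ∃ (E Γ : Ctx V α) (X : V) (a a' : α) (S S' : DT V α),
    T = E.fill (Γ.fill (node X a S)) ∧ Γ.fill (node X a S) = node X a' S' ∧ 0 < Γ.cnt x

theorem HasPump.fill [DecidableEq α] {x : α} {T : DT V α} (K : Ctx V α) (h : HasPump x T) :
    HasPump x (K.fill T) := by
  obtain ⟨E, Γ, X, a, a', S, S', h1, h2, h3⟩ := h
  exact ⟨K.comp E, Γ, X, a, a', S, S', by rw [Ctx.fill_comp, ← h1], h2, h3⟩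

def bnd (r : ℕ) : ℕ → ℕ
  | 0 => 0
  | j + 1 => 1 + r * bnd r j + bnd r j

theorem ogden_aux [DecidableEq α] (x : α) (r : ℕ) (j : ℕ) :
    ∀ (n : ℕ) (X : V) (a : α) (S : DT V α), sz S ≤ n → Bd r S → bnd r j < count x (node X a S) →
      HasPump x (node X a S) ∨ ∃ U : Finset V, U.card = j ∧ ∀ Y ∈ U, ∃ E b S',
        node X a S = Ctx.fill E (node Y b S') := by
  classical
  induction j with
  | zero => intro n X a S _ _ _; right; exact ⟨∅, rfl, by simp⟩
  | succ j ihj =>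
    intro n
    induction n with
    | zero =>
      intro X a S hs hb hc
      exfalso
      have : ∀ T : DT V α, sz T ≤ 0 → count x T = 0 := by
        intro T
        induction T <;> simp_all [sz, count]
      have h0 := this S hs
      simp only [count, bnd, h0] at hc
      split at hc <;> omega
    | succ n ihn =>
      intro X a S hs hb hc
      have hcS : r * bnd r j < count x S := by
        simp only [count, bnd] at hc
        split at hc <;> omega
      have hw := Bd.width_le hb
      obtain ⟨E, Y, b, S', e, hc'⟩ := top_node x (bnd r j) S
        (lt_of_le_of_lt (Nat.mul_le_mul_right _ hw) hcS)
      have hbN : Bd r (node Y b S') := bd_fill E _ (e ▸ hb)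
      have hsN : sz (node Y b S') ≤ sz S := by rw [e]; exact sz_fill E _
      have eN : node X a S = Ctx.fill (E.node X a) (node Y b S') := by rw [Ctx.fill, ← e]
      by_cases hlt : bnd r (j + 1) < count x (node Y b S')
      · rcases ihn Y b S' (by simp only [sz] at hsN; omega) hbN.2 hlt with h | ⟨U, hU, h⟩
        · left
          rw [eN]
          exact h.fill _
        · right
          refine ⟨U, hU, fun Z hZ => ?_⟩
          obtain ⟨E', b', S'', e'⟩ := h Z hZ
          exact ⟨(E.node X a).comp E', b', S'', by rw [Ctx.fill_comp, ← e', ← eN]⟩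
      · rcases ihj _ Y b S' le_rfl hbN.2 hc' with h | ⟨U, hU, h⟩
        · left
          rw [eN]
          exact h.fill _
        · by_cases hX : X ∈ U
          · left
            obtain ⟨E', b', S'', e'⟩ := h X hX
            have e2 : node X a S = Ctx.fill ((E.node X a).comp E') (node X b' S'') := by
              rw [Ctx.fill_comp, ← e', ← eN]
            refine ⟨.hole, (E.node X a).comp E', X, b', a, S'', S, e2, e2.symm, ?_⟩
            have c1 := Ctx.count_fill x ((E.node X a).comp E') (node X b' S'')
            rw [← e2] at c1
            have c2 := Ctx.count_fill x E' (node X b' S'')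
            rw [← e'] at c2
            omega
          · right
            refine ⟨insert X U, by rw [Finset.card_insert_of_notMem hX, hU], fun Z hZ => ?_⟩
            rcases Finset.mem_insert.1 hZ with rfl | hZ
            · exact ⟨.hole, a, S, rfl⟩
            · obtain ⟨E', b', S'', e'⟩ := h Z hZ
              exact ⟨(E.node X a).comp E', b', S'', by rw [Ctx.fill_comp, ← e', ← eN]⟩

theorem ogden [DecidableEq α] [Finite V] (r : ℕ) : ∃ M : ℕ, ∀ (x : α) (T : DT V α), Bd r T →
    M < count x T → HasPump x T := by
  have := Fintype.ofFinite V
  refine ⟨r * bnd r (Fintype.card V + 1), fun x T hb hc => ?_⟩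
  obtain ⟨E, X, a, S, rfl, hc'⟩ := top_node x (bnd r (Fintype.card V + 1)) T
    (lt_of_le_of_lt (Nat.mul_le_mul_right _ hb.width_le) hc)
  have hbN := bd_fill E _ hb
  rcases ogden_aux x r _ _ X a S le_rfl hbN.2 hc' with h | ⟨U, hU, _⟩
  · exact h.fill E
  · have := Finset.card_le_univ U
    omega

end DT

section der
variable {V α : Type} {P : Set (V × α × PATerm V)}

theorem der_sub {t : PATerm V} (E : Ctx V α) {X : V} {a : α} {S : DT V α}
    (h : Der P t (E.fill (node X a S))) : Der P (PATerm.var X) (node X a S) := by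
  induction E generalizing t with
  | hole =>
    cases h with
    | node h1 h2 => exact .node h1 h2
  | seqL C U ih => cases h with | seq h1 h2 => exact ih h1
  | seqR U C ih => cases h with | seq h1 h2 => exact ih h2
  | parL C U ih => cases h with | par h1 h2 => exact ih h1
  | parR U C ih => cases h with | par h1 h2 => exact ih h2
  | node X a C ih => cases h with | node h1 h2 => exact ih h2

theorem der_replace {t : PATerm V} (E : Ctx V α) {X : V} {a a' : α} {S S' : DT V α}
    (h : Der P t (E.fill (node X a S))) (h' : Der P (PATerm.var X) (node X a' S')) :
    Der P t (E.fill (node X a' S')) := by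
  induction E generalizing t with
  | hole =>
    cases h with
    | node h1 h2 => exact h'
  | seqL C U ih => cases h with | seq h1 h2 => exact .seq (ih h1) h2
  | seqR U C ih => cases h with | seq h1 h2 => exact .seq h1 (ih h2)
  | parL C U ih => cases h with | par h1 h2 => exact .par (ih h1) h2
  | parR U C ih => cases h with | par h1 h2 => exact .par h1 (ih h2)
  | node X a C ih => cases h with | node h1 h2 => exact .node h1 (ih h2)

def PATerm.width : PATerm V → ℕ
  | .eps => 0
  | .var _ => 1
  | .seq t u => width t + width u
  | .par t u => width t + width u

theorem der_width {t : PATerm V} {T : DT V α} (h : Der P t T) : T.width = t.width := by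
  induction h <;> simp_all [DT.width, PATerm.width]

theorem der_bd {t : PATerm V} {T : DT V α} (h : Der P t T) (r : ℕ) (hr : 1 ≤ r)
    (hP : ∀ p ∈ P, p.2.2.width ≤ r) (ht : t.width ≤ r) : Bd r T := by
  induction h with
  | eps => trivial
  | seq h1 h2 ih1 ih2 =>
    simp only [PATerm.width] at ht
    exact ⟨by rw [der_width h1, der_width h2]; exact ht, ih1 (by omega), ih2 (by omega)⟩
  | par h1 h2 ih1 ih2 =>
    simp only [PATerm.width] at ht
    exact ⟨by rw [der_width h1, der_width h2]; exact ht, ih1 (by omega), ih2 (by omega)⟩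
  | node hp _ ih => exact ⟨hr, ih (hP _ hp)⟩

end der

/-! ### The separation argument -/

section notPA
open Lt

structure GoodL (L : Set (List Lt)) : Prop where
  ba : ∀ w ∈ L, ¬ [b, a].Sublist w
  db : ∀ w ∈ L, ¬ [d, b].Sublist w
  ac : ∀ w ∈ L, w.count a = w.count c
  bd : ∀ w ∈ L, w.count b = w.count d
  bal : ∀ u v, u ++ g :: v ∈ L → u.count a = u.count c

variable {V : Type} {L : Set (List Lt)}

theorem inter_split {α : Type} (α1 α2 β1 β2 : List α) (x : α) :
    IsInterleaving (α1 ++ x :: α2) (β1 ++ β2) (α1 ++ (β1 ++ x :: (β2 ++ α2))) :=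
  inter_append_left _ (inter_append_right _ (.left (inter_symm (inter_append _ _))))

theorem par_g (hL : GoodL L) (E : Ctx V Lt) (A B : DT V Lt)
    (h : ∀ w, Lin (E.fill (A.par B)) w → w ∈ L) (hg : 0 < A.count g) :
    B.count a = 0 ∧ B.count c = 0 := by
  obtain ⟨p, q, hpq⟩ := fill_block E
  obtain ⟨α, hα⟩ := lin_exists A
  obtain ⟨β, hβ⟩ := lin_exists B
  obtain ⟨α1, α2, rfl⟩ := List.append_of_mem (lin_mem hα hg)
  have key : ∀ β1 β2, β = β1 ++ β2 →
      (p ++ α1 ++ β1).count a = (p ++ α1 ++ β1).count c := by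
    rintro β1 β2 rfl
    have := h _ (hpq _ _ ⟨_, _, hα, hβ, inter_split α1 α2 β1 β2 g⟩)
    refine hL.bal _ (β2 ++ α2 ++ q) ?_
    simpa using this
  constructor
  · by_contra hne
    obtain ⟨β1, β2, rfl⟩ := List.append_of_mem (lin_mem hβ (Nat.pos_of_ne_zero hne))
    have k1 := key β1 _ rfl
    have k2 := key (β1 ++ [a]) β2 (by simp)
    simp [List.count_cons] at k1 k2
    omega
  · by_contra hne
    obtain ⟨β1, β2, rfl⟩ := List.append_of_mem (lin_mem hβ (Nat.pos_of_ne_zero hne))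
    have k1 := key β1 _ rfl
    have k2 := key (β1 ++ [c]) β2 (by simp)
    simp [List.count_cons] at k1 k2
    omega

theorem par_ba (hL : GoodL L) (E : Ctx V Lt) (A B : DT V Lt)
    (h : ∀ w, Lin (E.fill (A.par B)) w → w ∈ L) (hb : 0 < A.count b) :
    B.count a = 0 := by
  by_contra hne
  obtain ⟨p, q, hpq⟩ := fill_block E
  obtain ⟨α, hα⟩ := lin_exists A
  obtain ⟨β, hβ⟩ := lin_exists B
  have := h _ (hpq _ _ ⟨_, _, hα, hβ, inter_append _ _⟩)
  refine hL.ba _ this ?_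
  have h1 := pair_sub (lin_mem hα hb) (lin_mem hβ (Nat.pos_of_ne_zero hne))
  exact (h1.trans (List.sublist_append_right _ _)).trans (List.sublist_append_left _ _)

def rk : Lt → ℕ
  | s => 0 | a => 1 | b => 2 | c => 3 | g => 4 | d => 5

def w0 (k n : ℕ) : List Lt :=
  s :: (List.replicate k a ++ (List.replicate (n + 1) b ++ (List.replicate k c ++
    g :: List.replicate (n + 1) d)))

theorem w0_pw (k n : ℕ) : (w0 k n).Pairwise (fun x y => rk x ≤ rk y) := by
  simp only [w0, List.pairwise_cons, List.pairwise_append, List.pairwise_replicate,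
    List.mem_append, List.mem_replicate, List.mem_cons]
  refine ⟨?_, ?_, ⟨?_, ⟨?_, ⟨?_, ?_⟩, ?_⟩, ?_⟩, ?_⟩ <;> simp [rk] <;> aesop

theorem w0_not {k n : ℕ} {x y : Lt} (h : rk y < rk x) : ¬ [x, y].Sublist (w0 k n) := by
  intro hs
  have := (w0_pw k n).sublist hs
  simp at this
  omega

/-- the context of a tree containing `b` and `d` -/
theorem ctx_c (hL : GoodL L) {k n : ℕ} (E : Ctx V Lt) (R : DT V Lt)
    (h : ∀ w, Lin (E.fill R) w → w ∈ L) (h0 : Lin (E.fill R) (w0 k n))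
    (hb : 0 < R.count b) (hd : 0 < R.count d) (hg : 0 < R.count g) : E.cnt c = 0 := by
  by_contra hne
  rcases Ctx.modes c E (Nat.pos_of_ne_zero hne) with hm | hm | hm
  · exact w0_not (by decide) (bef_sub E R hm hb _ h0)
  · exact w0_not (by decide) (aft_sub E R hm hd _ h0)
  · obtain ⟨E', F, Q, hq, e | e⟩ := hm
    · rw [e] at h
      have := (par_g hL E' _ _ h (by rw [Ctx.count_fill]; omega)).2
      omega
    · rw [e] at h
      have := (par_g hL E' _ _ (fun w hw => h w (fill_lin _ lin_par_symm _ hw))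
        (by rw [Ctx.count_fill]; omega)).2
      omega

theorem case_g (hL : GoodL L) {k n M : ℕ} (hk : M < k) (E F : Ctx V Lt) (Q R : DT V Lt)
    (h : ∀ w, Lin (E.fill ((F.fill R).par Q)) w → w ∈ L)
    (h0 : Lin (E.fill ((F.fill R).par Q)) (w0 k n))
    (hQ : M < Q.count c → 0 < Q.count a)
    (hkc : (E.fill ((F.fill R).par Q)).count c = k)
    (hb : 0 < R.count b) (hd : 0 < R.count d) (hg : 0 < Q.count g) : False := by
  have hZ := par_g hL E _ _ (fun w hw => h w (fill_lin _ lin_par_symm _ hw)) hg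
  have hQa := par_ba hL E _ _ h (by rw [Ctx.count_fill]; omega)
  have hE := ctx_c hL E _ h h0 (by rw [DT.count, Ctx.count_fill]; omega)
    (by rw [DT.count, Ctx.count_fill]; omega) (by rw [DT.count]; omega)
  rw [Ctx.count_fill, DT.count] at hkc
  have := hQ (by omega)
  omega

theorem claimR (hL : GoodL L) {k n M : ℕ} (hk : M < k) (E : Ctx V Lt) (R : DT V Lt)
    (h : ∀ w, Lin (E.fill R) w → w ∈ L) (h0 : Lin (E.fill R) (w0 k n))
    (hpump : ∀ K Q, E.fill R = Ctx.fill K Q → M < Q.count c → 0 < Q.count a)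
    (hb : 0 < R.count b) (hd : 0 < R.count d) : 0 < R.count a := by
  have hkc : (E.fill R).count c = k := by
    rw [← lin_count c _ _ h0]
    simp [w0, List.count_cons, List.count_replicate]
  have hgc : 0 < (E.fill R).count g := by
    rw [← lin_count g _ _ h0]
    simp [w0, List.count_cons, List.count_replicate]
  rw [Ctx.count_fill] at hgc
  by_cases hg : 0 < R.count g
  · have := ctx_c hL E R h h0 hb hd hg
    rw [Ctx.count_fill] at hkc
    exact hpump E R rfl (by omega)
  · exfalso
    rcases Ctx.modes g E (by omega) with hm | hm | hm
    · exact w0_not (by decide) (bef_sub E R hm hb _ h0)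
    · exact w0_not (by decide) (aft_sub E R hm hd _ h0)
    · obtain ⟨E', F, Q, hq, e | e⟩ := hm
      · have hp := hpump (E'.comp (Ctx.parR (F.fill R) .hole)) Q
          (by rw [Ctx.fill_comp, e]; rfl)
        rw [e] at h h0 hkc
        exact case_g hL hk E' F Q R h h0 hp hkc hb hd hq
      · have hp := hpump (E'.comp (Ctx.parL .hole (F.fill R))) Q
          (by rw [Ctx.fill_comp, e]; rfl)
        rw [e] at h h0 hkc
        refine case_g hL hk E' F Q R (fun w hw => h w (fill_lin _ lin_par_symm _ hw))
          (fill_lin _ lin_par_symm _ h0) hp ?_ hb hd hq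
        rw [Ctx.count_fill, DT.count] at hkc ⊢
        omega

theorem notPA (hL : GoodL L) (h4 : ∀ k n, w0 k n ∈ L) : ¬ IsShuffleCFL L := by
  rintro ⟨G, hG⟩
  have := G.finV
  obtain ⟨r, hr1, hr⟩ : ∃ r, 1 ≤ r ∧ ∀ p ∈ G.prods, p.2.2.width ≤ r := by
    obtain ⟨r, hr⟩ := (G.finP.image (fun p => p.2.2.width)).bddAbove
    exact ⟨r + 1, by omega, fun p hp => (hr (Set.mem_image_of_mem _ hp)).trans (by omega)⟩
  obtain ⟨M, hM⟩ := ogden (V := G.V) (α := Lt) r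
  have hlin : ∀ T, Der G.prods (PATerm.var G.start) T → ∀ w, Lin T w → w ∈ L := by
    intro T hT w hw
    rw [← hG]
    exact gen_of_der hT w hw
  have hmem := h4 (M + 1) M
  rw [← hG] at hmem
  obtain ⟨T, hT, h0⟩ := sem_of_gen hmem
  have hbd : Bd r T := der_bd hT r hr1 hr hr1
  have hcount : ∀ T, Der G.prods (PATerm.var G.start) T →
      T.count a = T.count c ∧ T.count b = T.count d := by
    intro T hT
    obtain ⟨w, hw⟩ := lin_exists T
    have h1 := hL.ac _ (hlin T hT w hw)
    have h2 := hL.bd _ (hlin T hT w hw)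
    simp only [lin_count _ T w hw] at h1 h2
    exact ⟨h1, h2⟩
  -- pumping facts
  have hpump : ∀ (E Γ : Ctx G.V Lt) (X : G.V) (l l' : Lt) (S S' : DT G.V Lt),
      T = E.fill (Γ.fill (node X l S)) → Γ.fill (node X l S) = node X l' S' →
      Der G.prods (PATerm.var G.start) (E.fill (Γ.fill (Γ.fill (node X l S)))) ∧
      Γ.cnt a = Γ.cnt c ∧ Γ.cnt b = Γ.cnt d := by
    intro E Γ X l l' S S' e e'
    have hd : Der G.prods (PATerm.var G.start) (E.fill (Γ.fill (Γ.fill (node X l S)))) := by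
      rw [e, ← Ctx.fill_comp] at hT
      have h1 : Der G.prods (PATerm.var X) (node X l' S') := by
        rw [Ctx.fill_comp, e'] at hT
        exact der_sub E hT
      have h2 := der_replace (E.comp Γ) hT h1
      rw [Ctx.fill_comp, ← e'] at h2
      exact h2
    refine ⟨hd, ?_⟩
    have c1 := hcount _ hd
    have c2 := hcount _ hT
    rw [e] at c2
    simp only [Ctx.count_fill] at c1 c2
    omega
  obtain ⟨E, Γ, X, l, l', S, S', e, e', hΓ⟩ := hM b T hbd (by
    rw [← lin_count b _ _ h0]
    simp [w0, List.count_cons, List.count_replicate])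
  obtain ⟨hd, _, hΓd⟩ := hpump E Γ X l l' S S' e e'
  have hR : 0 < (Γ.fill (node X l S)).count a := by
    subst e
    refine claimR hL (M := M) (by omega) E _ (hlin _ hT) h0 ?_
      (by rw [Ctx.count_fill]; omega) (by rw [Ctx.count_fill]; omega)
    intro K Q eQ hQ
    obtain ⟨E2, Γ2, X2, l2, l2', S2, S2', e2, e2', hΓ2⟩ := hM c Q (by
      rw [eQ] at hbd
      exact bd_fill K Q hbd) hQ
    obtain ⟨_, h5, _⟩ := hpump (K.comp E2) Γ2 X2 l2 l2' S2 S2'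
      (by rw [Ctx.fill_comp, ← e2, eQ]) e2'
    rw [e2, Ctx.count_fill, Ctx.count_fill]
    omega
  have hRd : 0 < (Γ.fill (node X l S)).count d := by rw [Ctx.count_fill]; omega
  have hin := hlin _ hd
  rcases Ctx.modes b Γ hΓ with hm | hm | hm
  · obtain ⟨w, hw⟩ := lin_exists (E.fill (Γ.fill (Γ.fill (node X l S))))
    obtain ⟨v, hv, hvw⟩ := fill_sub _ _ _ hw
    exact hL.ba _ (hin w hw) ((bef_sub _ _ hm hR _ hv).trans hvw)
  · obtain ⟨w, hw⟩ := lin_exists (E.fill (Γ.fill (Γ.fill (node X l S))))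
    obtain ⟨v, hv, hvw⟩ := fill_sub _ _ _ hw
    exact hL.db _ (hin w hw) ((aft_sub _ _ hm hRd _ hv).trans hvw)
  · obtain ⟨E', F, Q, hq, e | e⟩ := hm
    · rw [e, ← Ctx.fill_comp] at hin
      have := par_ba hL _ _ _ (fun w hw => hin w (fill_lin _ lin_par_symm _ hw)) hq
      rw [Ctx.count_fill] at this
      omega
    · rw [e, ← Ctx.fill_comp] at hin
      have := par_ba hL _ _ _ hin hq
      rw [Ctx.count_fill] at this
      omega

end notPA

/-! ### The language -/

section lang
open Lt

inductive T1 : Type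
  | x : T1
  | y (m : ℕ) : T1
  | d (m : ℕ) : T1

inductive Acc1 : T1 → ℕ → Bool → List Lt → Prop
  | done : Acc1 (.d 0) 0 false []
  | a {i f w} : Acc1 .x (i + 1) f w → Acc1 .x i f (a :: w)
  | b0 {i f w} : Acc1 (.y 0) i f w → Acc1 .x i f (b :: w)
  | b {m i f w} : Acc1 (.y (m + 1)) i f w → Acc1 (.y m) i f (b :: w)
  | d0 {m i f w} : Acc1 (.d m) i f w → Acc1 (.y m) i f (d :: w)
  | d {m i f w} : Acc1 (.d m) i f w → Acc1 (.d (m + 1)) i f (d :: w)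
  | c {t i f w} : Acc1 t i f w → Acc1 t (i + 1) f (c :: w)
  | g {t w} : Acc1 t 0 false w → Acc1 t 0 true (g :: w)

def theL : Set (List Lt) := {w | ∃ v, w = s :: v ∧ Acc1 .x 0 true v}

def needA : T1 → ℕ → ℕ → Prop
  | .x, _, _ => True
  | .y _, na, _ => na = 0
  | .d _, na, nb => na = 0 ∧ nb = 0

def offD : T1 → ℕ
  | .x => 0
  | .y m => m + 1
  | .d m => m

theorem acc_counts {t i f w} (h : Acc1 t i f w) :
    w.count a + i = w.count c ∧ w.count b + offD t = w.count d ∧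
      needA t (w.count a) (w.count b) := by
  induction h <;> simp_all [offD, needA, List.count_cons] <;> first | omega | skip
  cases ‹T1› <;> simp_all [needA] <;> omega

theorem acc_ba {t i f w} (h : Acc1 t i f w) : ¬ [b, a].Sublist w := by
  induction h with
  | done => simp
  | a _ ih => intro hs; cases hs with | cons _ h => exact ih h
  | d0 _ ih => intro hs; cases hs with | cons _ h => exact ih h
  | d _ ih => intro hs; cases hs with | cons _ h => exact ih h
  | c _ ih => intro hs; cases hs with | cons _ h => exact ih h
  | g _ ih => intro hs; cases hs with | cons _ h => exact ih h
  | b0 h' ih =>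
    intro hs
    cases hs with
    | cons _ h => exact ih h
    | cons_cons _ h =>
      have := List.count_pos_iff.2 (List.singleton_sublist.1 h)
      have h2 := (acc_counts h').2.2
      simp only [needA] at h2
      omega
  | b h' ih =>
    intro hs
    cases hs with
    | cons _ h => exact ih h
    | cons_cons _ h =>
      have := List.count_pos_iff.2 (List.singleton_sublist.1 h)
      have h2 := (acc_counts h').2.2
      simp only [needA] at h2
      omega

theorem acc_db {t i f w} (h : Acc1 t i f w) : ¬ [d, b].Sublist w := by
  induction h with
  | done => simp
  | a _ ih => intro hs; cases hs with | cons _ h => exact ih h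
  | b0 _ ih => intro hs; cases hs with | cons _ h => exact ih h
  | b _ ih => intro hs; cases hs with | cons _ h => exact ih h
  | c _ ih => intro hs; cases hs with | cons _ h => exact ih h
  | g _ ih => intro hs; cases hs with | cons _ h => exact ih h
  | d0 h' ih =>
    intro hs
    cases hs with
    | cons _ h => exact ih h
    | cons_cons _ h =>
      have := List.count_pos_iff.2 (List.singleton_sublist.1 h)
      have h2 := (acc_counts h').2.2
      simp only [needA] at h2
      omega
  | d h' ih =>
    intro hs
    cases hs with
    | cons _ h => exact ih h
    | cons_cons _ h =>
      have := List.count_pos_iff.2 (List.singleton_sublist.1 h)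
      have h2 := (acc_counts h').2.2
      simp only [needA] at h2
      omega

theorem acc_g {t i f w} (h : Acc1 t i f w) :
    ∀ u v, w = u ++ g :: v → u.count a + i = u.count c := by
  induction h with
  | done => intro u v e; simp at e
  | g _ ih =>
    intro u v e
    cases u with
    | nil => simp
    | cons p u =>
      simp only [List.cons_append, List.cons.injEq] at e
      obtain ⟨rfl, e⟩ := e
      have := ih u v e
      simp [List.count_cons] at this ⊢
      omega
  | _ _ ih =>
    intro u v e
    cases u with
    | nil => simp at e
    | cons p u =>
      simp only [List.cons_append, List.cons.injEq] at e
      obtain ⟨rfl, e⟩ := e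
      have := ih u v e
      simp [List.count_cons] at this ⊢
      omega

theorem good_theL : GoodL theL where
  ba := by
    rintro w ⟨v, rfl, h⟩ hs
    cases hs with | cons _ h' => exact acc_ba h h'
  db := by
    rintro w ⟨v, rfl, h⟩ hs
    cases hs with | cons _ h' => exact acc_db h h'
  ac := by
    rintro w ⟨v, rfl, h⟩
    have := (acc_counts h).1
    simpa [List.count_cons] using this
  bd := by
    rintro w ⟨v, rfl, h⟩
    have := (acc_counts h).2.1
    simpa [List.count_cons, offD] using this
  bal := by
    rintro u v ⟨v', e, h⟩
    cases u with
    | nil => simp at e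
    | cons p u =>
      simp only [List.cons_append, List.cons.injEq] at e
      obtain ⟨rfl, e⟩ := e
      have := acc_g h u v e.symm
      simpa [List.count_cons] using this

theorem acc_as (k : ℕ) {i f w} (h : Acc1 .x (i + k) f w) :
    Acc1 .x i f (List.replicate k a ++ w) := by
  induction k generalizing i with
  | zero => exact h
  | succ k ih => exact .a (ih (by rw [show i + 1 + k = i + (k + 1) by omega]; exact h))

theorem acc_bs (k : ℕ) {m i f w} (h : Acc1 (.y (m + k)) i f w) :
    Acc1 (.y m) i f (List.replicate k b ++ w) := by
  induction k generalizing m with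
  | zero => exact h
  | succ k ih => exact .b (ih (by rw [show m + 1 + k = m + (k + 1) by omega]; exact h))

theorem acc_cs (k : ℕ) {t f w} (h : Acc1 t 0 f w) :
    Acc1 t k f (List.replicate k c ++ w) := by
  induction k with
  | zero => exact h
  | succ k ih => exact .c ih

theorem acc_ds (k : ℕ) : Acc1 (.d k) 0 false (List.replicate k d) := by
  induction k with
  | zero => exact .done
  | succ k ih => exact .d ih

theorem w0_mem (k n : ℕ) : w0 k n ∈ theL := by
  refine ⟨_, rfl, acc_as k ?_⟩
  rw [Nat.zero_add]
  refine .b0 (acc_bs n ?_)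
  rw [Nat.zero_add]
  exact acc_cs k (.g (.d0 (acc_ds n)))

/-! ### membership in trPCCFL -/

inductive NV : Type
  | S | X | Y | D | C | G
  deriving DecidableEq

theorem finite_NV : Finite NV :=
  Set.finite_univ_iff.1 (Set.Finite.subset
    (List.finite_toSet [NV.S, NV.X, NV.Y, NV.D, NV.C, NV.G])
    (fun x _ => by cases x <;> simp))

def thr : NV → Bool
  | .C => true
  | .G => true
  | _ => false

def pcProds : List (NV × Lt × List NV) :=
  [(.S, s, [.X, .G]), (.X, a, [.X, .C]), (.X, b, [.Y]), (.Y, b, [.Y, .D]), (.Y, d, []),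
   (.D, d, []), (.C, c, []), (.G, g, [])]

def pcG : PCGrammar Lt where
  V := NV
  finV := finite_NV
  start := .S
  prods := {p | p ∈ pcProds}
  finP := List.finite_toSet pcProds
  indep X Y := thr X ≠ thr Y
  indep_symm h := h.symm
  indep_irrefl _ h := h rfl

inductive PCD : List NV → List Lt → Prop
  | nil : PCD [] []
  | prod {X : NV} {x : Lt} {γ β : List NV} {w : List Lt} :
      (X, x, γ) ∈ pcProds → PCD (γ ++ β) w → PCD (X :: β) (x :: w)
  | swap {η β : List NV} {X Y : NV} {w : List Lt} :
      thr X ≠ thr Y → PCD (η ++ Y :: X :: β) w → PCD (η ++ X :: Y :: β) w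

theorem pcd_of {γ : List pcG.V} {w : List Lt} (h : PCDerives pcG γ w) : PCD γ w := by
  induction h with
  | nil => exact PCD.nil
  | prod hp _ ih => exact PCD.prod hp ih
  | swap hi _ ih => exact PCD.swap hi ih

theorem of_pcd {γ : List NV} {w : List Lt} (h : PCD γ w) : PCDerives pcG γ w := by
  induction h with
  | nil => exact PCDerives.nil
  | prod hp _ ih => exact PCDerives.prod (G := pcG) hp ih
  | swap hi _ ih => exact PCDerives.swap (G := pcG) hi ih

def enc1 : T1 → List NV
  | .x => [.X]
  | .y m => .Y :: List.replicate m .D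
  | .d m => List.replicate m .D

def enc2 (i : ℕ) (f : Bool) : List NV := List.replicate i .C ++ if f then [.G] else []

theorem pc_acc (γ : List NV) (w : List Lt) (h : PCD γ w) :
    ∀ t i f, γ.filter (fun v => !thr v) = enc1 t → γ.filter thr = enc2 i f → Acc1 t i f w := by
  induction h with
  | nil =>
    intro t i f h1 h2
    rcases t with _ | m | m
    · simp [enc1] at h1
    · simp [enc1] at h1
    · cases m with
      | succ m => simp [enc1, List.replicate_succ] at h1
      | zero =>
        cases i with
        | succ i => simp [enc2, List.replicate_succ] at h2
        | zero =>
          cases f with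
          | true => simp [enc2] at h2
          | false => exact .done
  | @prod X l γ β w hp _ ih =>
    intro t i f h1 h2
    replace hp : (X, l, γ) ∈ pcProds := hp
    simp only [pcProds, List.mem_cons, Prod.mk.injEq, List.not_mem_nil, or_false] at hp
    rcases hp with ⟨rfl, rfl, rfl⟩ | ⟨rfl, rfl, rfl⟩ | ⟨rfl, rfl, rfl⟩ | ⟨rfl, rfl, rfl⟩ |
      ⟨rfl, rfl, rfl⟩ | ⟨rfl, rfl, rfl⟩ | ⟨rfl, rfl, rfl⟩ | ⟨rfl, rfl, rfl⟩
    · rcases t with _ | m | m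
      · simp [enc1, List.filter_cons, thr] at h1
      · simp [enc1, List.filter_cons, thr] at h1
      · cases m <;> simp [enc1, List.filter_cons, thr, List.replicate_succ] at h1
    · rcases t with _ | m | m
      · refine .a (ih .x (i + 1) f ?_ ?_)
        · simpa [enc1, List.filter_cons, thr] using h1
        · simpa [enc2, List.filter_cons, thr, List.replicate_succ] using h2
      · simp [enc1, List.filter_cons, thr] at h1
      · cases m <;> simp [enc1, List.filter_cons, thr, List.replicate_succ] at h1
    · rcases t with _ | m | m
      · refine .b0 (ih (.y 0) i f ?_ ?_)
        · simpa [enc1, List.filter_cons, thr] using h1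
        · simpa [enc2, List.filter_cons, thr, List.replicate_succ] using h2
      · simp [enc1, List.filter_cons, thr] at h1
      · cases m <;> simp [enc1, List.filter_cons, thr, List.replicate_succ] at h1
    · rcases t with _ | m | m
      · simp [enc1, List.filter_cons, thr] at h1
      · refine .b (ih (.y (m + 1)) i f ?_ ?_)
        · simpa [enc1, List.filter_cons, thr, List.replicate_succ] using h1
        · simpa [enc2, List.filter_cons, thr, List.replicate_succ] using h2
      · cases m <;> simp [enc1, List.filter_cons, thr, List.replicate_succ] at h1
    · rcases t with _ | m | m
      · simp [enc1, List.filter_cons, thr] at h1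
      · refine .d0 (ih (.d m) i f ?_ ?_)
        · simpa [enc1, List.filter_cons, thr, List.replicate_succ] using h1
        · simpa [enc2, List.filter_cons, thr, List.replicate_succ] using h2
      · cases m <;> simp [enc1, List.filter_cons, thr, List.replicate_succ] at h1
    · rcases t with _ | m | m
      · simp [enc1, List.filter_cons, thr] at h1
      · simp [enc1, List.filter_cons, thr] at h1
      · cases m with
        | zero => simp [enc1, List.filter_cons, thr] at h1
        | succ m =>
          refine .d (ih (.d m) i f ?_ ?_)
          · simpa [enc1, List.filter_cons, thr, List.replicate_succ] using h1
          · simpa [enc2, List.filter_cons, thr, List.replicate_succ] using h2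
    · cases i with
      | zero => cases f <;> simp [enc2, List.filter_cons, thr] at h2
      | succ i =>
        refine .c (ih t i f ?_ ?_)
        · simpa [List.filter_cons, thr] using h1
        · simpa [enc2, List.filter_cons, thr, List.replicate_succ] using h2
    · cases i with
      | succ i => simp [enc2, List.filter_cons, thr, List.replicate_succ] at h2
      | zero =>
        cases f with
        | false => simp [enc2, List.filter_cons, thr] at h2
        | true =>
          refine .g (ih t 0 false ?_ ?_)
          · simpa [List.filter_cons, thr] using h1
          · simpa [enc2, List.filter_cons, thr, List.replicate_succ] using h2
  | @swap η β X Y w hi _ ih =>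
    intro t i f h1 h2
    replace hi : thr X ≠ thr Y := hi
    refine ih t i f ?_ ?_
    · rw [← h1]
      cases hX : thr X <;> cases hY : thr Y <;> simp_all [List.filter_append, List.filter_cons]
    · rw [← h2]
      cases hX : thr X <;> cases hY : thr Y <;> simp_all [List.filter_append, List.filter_cons]

theorem pc_bring (Z : NV) (η : List NV) (h : ∀ v ∈ η, thr v ≠ thr Z) (β : List NV) (w : List Lt) :
    ∀ κ : List NV, PCD (κ ++ Z :: (η ++ β)) w → PCD (κ ++ (η ++ Z :: β)) w := by
  induction η with
  | nil => intro κ hd; exact hd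
  | cons v η ih =>
    intro κ hd
    have h1 := ih (fun u hu => h u (List.mem_cons_of_mem _ hu)) (κ ++ [v])
    have h2 : PCD (κ ++ v :: Z :: (η ++ β)) w :=
      PCD.swap (h v List.mem_cons_self) hd
    simpa using h1 (by simpa using h2)

/-- executing a head symbol of one of the two threads -/
theorem pc_exec (p : NV → Bool) (hp : ∀ u v, p u ≠ p v → thr u ≠ thr v) {γ : List NV} {Z : NV}
    {l : List NV} (hγ : γ.filter p = Z :: l) :
    ∃ β, β.filter p = l ∧ γ.filter (fun v => !p v) = β.filter (fun v => !p v) ∧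
      ∀ (x : Lt) (rhs : List NV) (w : List Lt), (Z, x, rhs) ∈ pcProds →
        PCD (rhs ++ β) w → PCD γ (x :: w) := by
  obtain ⟨η, β, rfl, h1, h2, h3⟩ := List.filter_eq_cons_iff.1 hγ
  have h0 : η.filter p = [] := List.filter_eq_nil_iff.2 h1
  refine ⟨η ++ β, by simp [h0, h3], by simp [List.filter_append, List.filter_cons, h2], ?_⟩
  intro x rhs w hm hd
  have := pc_bring Z η (fun v hv => hp _ _ (by
    have := h1 v hv
    rw [h2]
    exact this)) β (x :: w) []
  exact this (PCD.prod hm hd)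

theorem acc_pc {t i f w} (h : Acc1 t i f w) : ∀ γ : List NV,
    γ.filter (fun v => !thr v) = enc1 t → γ.filter thr = enc2 i f → PCD γ w := by
  have hA : ∀ u v : NV, (!thr u) ≠ (!thr v) → thr u ≠ thr v := by
    intro u v h h'; exact h (by rw [h'])
  have hB : ∀ u v : NV, thr u ≠ thr v → thr u ≠ thr v := fun _ _ h => h
  induction h with
  | done =>
    intro γ h1 h2
    cases γ with
    | nil => exact .nil
    | cons v γ =>
      exfalso
      cases hv : thr v <;> simp [List.filter_cons, hv, enc1, enc2] at h1 h2
  | a _ ih =>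
    intro γ h1 h2
    obtain ⟨β, e1, e2, k⟩ := pc_exec _ hA h1
    simp only [Bool.not_not] at e2
    rw [h2] at e2
    refine k _ [.X, .C] _ (by simp [pcProds]) (ih _ ?_ ?_)
    · show NV.X :: β.filter (fun u => !thr u) = _
      rw [e1]
      rfl
    · simp [List.filter_cons, thr, ← e2, enc2, List.replicate_succ]
  | b0 _ ih =>
    intro γ h1 h2
    obtain ⟨β, e1, e2, k⟩ := pc_exec _ hA h1
    simp only [Bool.not_not] at e2
    rw [h2] at e2
    refine k _ [.Y] _ (by simp [pcProds]) (ih _ ?_ ?_)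
    · show NV.Y :: β.filter (fun u => !thr u) = _
      rw [e1]
      rfl
    · simp [List.filter_cons, thr, ← e2]
  | b _ ih =>
    intro γ h1 h2
    obtain ⟨β, e1, e2, k⟩ := pc_exec _ hA h1
    simp only [Bool.not_not] at e2
    rw [h2] at e2
    refine k _ [.Y, .D] _ (by simp [pcProds]) (ih _ ?_ ?_)
    · show NV.Y :: NV.D :: β.filter (fun u => !thr u) = _
      rw [e1]
      rfl
    · simp [List.filter_cons, thr, ← e2]
  | d0 _ ih =>
    intro γ h1 h2
    obtain ⟨β, e1, e2, k⟩ := pc_exec _ hA h1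
    simp only [Bool.not_not] at e2
    rw [h2] at e2
    refine k _ [] _ (by simp [pcProds]) (ih _ ?_ ?_)
    · simp [e1, enc1]
    · simp [← e2]
  | d _ ih =>
    intro γ h1 h2
    obtain ⟨β, e1, e2, k⟩ := pc_exec _ hA h1
    simp only [Bool.not_not] at e2
    rw [h2] at e2
    refine k _ [] _ (by simp [pcProds]) (ih _ ?_ ?_)
    · simp [e1, enc1]
    · simp [← e2]
  | c _ ih =>
    intro γ h1 h2
    obtain ⟨β, e1, e2, k⟩ := pc_exec _ hB h2
    rw [h1] at e2
    refine k _ [] _ (by simp [pcProds]) (ih _ ?_ ?_)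
    · simp [← e2]
    · simp [e1, enc2]
  | g _ ih =>
    intro γ h1 h2
    obtain ⟨β, e1, e2, k⟩ := pc_exec _ hB h2
    rw [h1] at e2
    refine k _ [] _ (by simp [pcProds]) (ih _ ?_ ?_)
    · simp [← e2]
    · simp [e1, enc2]

theorem pc_start {β γ : List NV} {w : List Lt} (h : PCD γ w) (hγ : γ = .S :: β)
    (hβ : β = []) : ∃ v, w = s :: v ∧ PCD [.X, .G] v := by
  cases h with
  | nil => simp at hγ
  | @prod X l γ β w hp h =>
    obtain ⟨rfl, rfl⟩ := List.cons.inj hγ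
    replace hp : (NV.S, l, γ) ∈ pcProds := hp
    simp [pcProds] at hp
    obtain ⟨rfl, rfl⟩ := hp
    subst hβ
    exact ⟨w, rfl, h⟩
  | @swap η β X Y w hi _ =>
    exfalso
    have := congrArg List.length hγ
    simp [hβ] at this
    omega

theorem trpc_theL : IsTrPCCFL theL := by
  refine ⟨pcG, ?_, ?_⟩
  · intro X Y Z h1 h2 h3
    exact h3 ((not_not.1 h1).trans (not_not.1 h2))
  · ext w
    constructor
    · intro h
      obtain ⟨v, rfl, hv⟩ := pc_start (β := []) (pcd_of h) rfl rfl
      exact ⟨v, rfl, pc_acc _ _ hv .x 0 true rfl rfl⟩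
    · rintro ⟨v, rfl, h⟩
      have h1 : PCD ([NV.X, NV.G] ++ []) v := acc_pc h _ rfl rfl
      exact of_pcd (PCD.prod (X := NV.S) (β := []) (by simp [pcProds]) h1)

/-! ### membership in traceCFL -/

def isBD : Lt → Prop
  | b => True
  | d => True
  | _ => False

def isCG : Lt → Prop
  | c => True
  | g => True
  | _ => False

def J (x y : Lt) : Prop := (isBD x ∧ isCG y) ∨ (isCG x ∧ isBD y)

theorem acc_swap_bc {t i f x y w} (hx : isBD x) (hy : isCG y) (h : Acc1 t i f (x :: y :: w)) :
    Acc1 t i f (y :: x :: w) := by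
  cases h with
  | a => exact hx.elim
  | c => exact hx.elim
  | g => exact hx.elim
  | b0 h =>
    cases h with
    | b => exact hy.elim
    | d0 => exact hy.elim
    | c h => exact .c (.b0 h)
    | g h => exact .g (.b0 h)
  | b h =>
    cases h with
    | b => exact hy.elim
    | d0 => exact hy.elim
    | c h => exact .c (.b h)
    | g h => exact .g (.b h)
  | d0 h =>
    cases h with
    | d => exact hy.elim
    | c h => exact .c (.d0 h)
    | g h => exact .g (.d0 h)
  | d h =>
    cases h with
    | d => exact hy.elim
    | c h => exact .c (.d h)
    | g h => exact .g (.d h)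

theorem acc_swap_cb {t i f x y w} (hx : isCG x) (hy : isBD y) (h : Acc1 t i f (x :: y :: w)) :
    Acc1 t i f (y :: x :: w) := by
  cases h with
  | a => exact hx.elim
  | b0 => exact hx.elim
  | b => exact hx.elim
  | d0 => exact hx.elim
  | d => exact hx.elim
  | c h =>
    cases h with
    | a => exact hy.elim
    | c => exact hy.elim
    | g => exact hy.elim
    | b0 h => exact .b0 (.c h)
    | b h => exact .b (.c h)
    | d0 h => exact .d0 (.c h)
    | d h => exact .d (.c h)
  | g h =>
    cases h with
    | a => exact hy.elim
    | b0 h => exact .b0 (.g h)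
    | b h => exact .b (.g h)
    | d0 h => exact .d0 (.g h)
    | d h => exact .d (.g h)

theorem acc_swap (p : List Lt) {t i f x y w} (hJ : J x y) (h : Acc1 t i f (p ++ x :: y :: w)) :
    Acc1 t i f (p ++ y :: x :: w) := by
  induction p generalizing t i f with
  | nil =>
    rcases hJ with ⟨hx, hy⟩ | ⟨hx, hy⟩
    · exact acc_swap_bc hx hy h
    · exact acc_swap_cb hx hy h
  | cons z p ih =>
    cases h with
    | a h => exact .a (ih h)
    | b0 h => exact .b0 (ih h)
    | b h => exact .b (ih h)
    | d0 h => exact .d0 (ih h)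
    | d h => exact .d (ih h)
    | c h => exact .c (ih h)
    | g h => exact .g (ih h)

theorem theL_swap {u v : List Lt} (h : AdjSwap J u v) (hu : u ∈ theL) : v ∈ theL := by
  obtain ⟨p, w, hJ⟩ := h
  obtain ⟨z, e, hz⟩ := hu
  cases p with
  | nil =>
    obtain ⟨rfl, _⟩ := List.cons.inj e
    rcases hJ with ⟨h, _⟩ | ⟨h, _⟩ <;> exact h.elim
  | cons q p =>
    obtain ⟨rfl, rfl⟩ := List.cons.inj e
    exact ⟨_, rfl, acc_swap p hJ hz⟩

theorem theL_trace {u v : List Lt} (h : TraceEquiv J u v) (hu : u ∈ theL) : v ∈ theL := by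
  induction h with
  | refl => exact hu
  | tail _ h ih => exact theL_swap h ih

inductive CN : Type
  | S | D | B
  deriving DecidableEq

abbrev tm (x : Lt) : Symbol Lt CN := Symbol.terminal x
abbrev nt (x : CN) : Symbol Lt CN := Symbol.nonterminal x

def cfRules : Finset (ContextFreeRule Lt CN) :=
  {⟨.S, [tm s, nt .D, tm g, nt .D, tm b, nt .B]⟩, ⟨.D, []⟩,
    ⟨.D, [tm a, nt .D, tm c, nt .D]⟩, ⟨.B, [tm b, nt .B, tm d]⟩, ⟨.B, [tm d]⟩}

def cfG : ContextFreeGrammar Lt where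
  NT := CN
  initial := .S
  rules := cfRules

def CS (u v : List (Symbol Lt CN)) : Prop :=
  ∃ r ∈ cfRules, ∃ p q, u = p ++ nt r.input :: q ∧ v = p ++ (r.output ++ q)

def CD : List (Symbol Lt CN) → List (Symbol Lt CN) → Prop := Relation.ReflTransGen CS

theorem cd_of {u v : List (Symbol Lt CN)} (h : cfG.Derives u v) : CD u v := by
  refine Relation.ReflTransGen.mono (r := cfG.Produces) (p := CS) ?_ _ _ h
  rintro x y ⟨r, hr, h⟩
  obtain ⟨p, q, rfl, rfl⟩ := h.exists_parts
  exact ⟨r, hr, p, q, List.append_assoc _ _ _, List.append_assoc _ _ _⟩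

theorem of_cd {u v : List (Symbol Lt CN)} (h : CD u v) : cfG.Derives u v := by
  refine Relation.ReflTransGen.mono (r := CS) (p := cfG.Produces) ?_ _ _ h
  rintro x y ⟨r, hr, p, q, rfl, rfl⟩
  refine ⟨r, hr, ?_⟩
  have := ContextFreeRule.rewrites_of_exists_parts r p q
  simp only [List.append_assoc] at this
  exact this

theorem CD.app_left {u v : List (Symbol Lt CN)} (h : CD u v) (z : List (Symbol Lt CN)) :
    CD (z ++ u) (z ++ v) := by
  refine Relation.ReflTransGen.lift (z ++ ·) ?_ _ _ h
  rintro x y ⟨r, hr, p, q, rfl, rfl⟩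
  exact ⟨r, hr, z ++ p, q, by simp, by simp⟩

theorem CD.app_right {u v : List (Symbol Lt CN)} (h : CD u v) (z : List (Symbol Lt CN)) :
    CD (u ++ z) (v ++ z) := by
  refine Relation.ReflTransGen.lift (· ++ z) ?_ _ _ h
  rintro x y ⟨r, hr, p, q, rfl, rfl⟩
  exact ⟨r, hr, p, q ++ z, by simp, by simp⟩

def symSem : Symbol Lt CN → List Lt → Prop
  | .terminal x, w => w = [x]
  | .nonterminal .S, w => w ∈ theL
  | .nonterminal .D, w => ∀ i f v, Acc1 .x i f v → Acc1 .x i f (w ++ v)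
  | .nonterminal .B, w => ∀ m i f v, Acc1 (.d m) i f v → Acc1 (.y m) i f (w ++ v)

def formSem : List (Symbol Lt CN) → List Lt → Prop
  | [], w => w = []
  | x :: u, w => ∃ w1 w2, symSem x w1 ∧ formSem u w2 ∧ w = w1 ++ w2

theorem formSem_append (u v : List (Symbol Lt CN)) (w : List Lt) :
    formSem (u ++ v) w ↔ ∃ w1 w2, formSem u w1 ∧ formSem v w2 ∧ w = w1 ++ w2 := by
  induction u generalizing w with
  | nil => simp [formSem]
  | cons x u ih =>
    simp only [List.cons_append, formSem, ih]
    constructor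
    · rintro ⟨w1, _, h1, ⟨w2, w3, h2, h3, rfl⟩, rfl⟩
      exact ⟨_, w3, ⟨w1, w2, h1, h2, rfl⟩, h3, by simp⟩
    · rintro ⟨_, w3, ⟨w1, w2, h1, h2, rfl⟩, h3, rfl⟩
      exact ⟨w1, _, h1, ⟨w2, w3, h2, h3, rfl⟩, by simp⟩

theorem rule_sound (r : ContextFreeRule Lt CN) (hr : r ∈ cfRules) (w : List Lt)
    (h : formSem r.output w) : symSem (nt r.input) w := by
  simp only [cfRules, Finset.mem_insert, Finset.mem_singleton] at hr
  rcases hr with rfl | rfl | rfl | rfl | rfl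
  · obtain ⟨_, _, rfl, ⟨w1, _, h1, ⟨_, _, rfl, ⟨w2, _, h2, ⟨_, _, rfl, ⟨w3, _, h3, rfl, rfl⟩,
      rfl⟩, rfl⟩, rfl⟩, rfl⟩, rfl⟩ := h
    refine ⟨_, rfl, ?_⟩
    refine h1 _ _ _ (.g (h2 _ _ _ (.b0 (h3 _ _ _ _ .done))))
  · obtain rfl := h
    intro i f v hv
    exact hv
  · obtain ⟨_, _, rfl, ⟨w1, _, h1, ⟨_, _, rfl, ⟨w2, _, h2, rfl, rfl⟩, rfl⟩, rfl⟩, rfl⟩ := h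
    intro i f v hv
    have := Acc1.a (h1 _ _ _ (.c (h2 _ _ _ hv)))
    simpa using this
  · obtain ⟨_, _, rfl, ⟨w1, _, h1, ⟨_, _, rfl, rfl, rfl⟩, rfl⟩, rfl⟩ := h
    intro m i f v hv
    have := Acc1.b (h1 _ _ _ _ (.d hv))
    simpa using this
  · obtain ⟨_, _, rfl, rfl, rfl⟩ := h
    intro m i f v hv
    exact .d0 hv

theorem derives_sound {u v : List (Symbol Lt CN)} (h : CD u v) (w : List Lt)
    (hw : formSem v w) : formSem u w := by
  induction h with
  | refl => exact hw
  | tail _ h ih =>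
    apply ih
    obtain ⟨r, hr, p, q, rfl, rfl⟩ := h
    rw [formSem_append] at hw ⊢
    obtain ⟨w1, w2, h1, h2, rfl⟩ := hw
    refine ⟨w1, w2, h1, ?_, rfl⟩
    rw [formSem_append] at h2
    obtain ⟨w2, w3, h2, h3, rfl⟩ := h2
    exact ⟨w2, w3, rule_sound r hr _ h2, h3, rfl⟩

theorem formSem_map (w : List Lt) : formSem (w.map Symbol.terminal) w := by
  induction w with
  | nil => rfl
  | cons x w ih => exact ⟨[x], w, rfl, ih, rfl⟩

theorem cfG_sub (w : List Lt) (hw : w ∈ cfG.language) : w ∈ theL := by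
  have := derives_sound (cd_of hw) w (formSem_map w)
  obtain ⟨w1, w2, h1, rfl, rfl⟩ := this
  rw [List.append_nil]
  exact h1

/-- one derivation step at a given place -/
theorem der_step (p q : List (Symbol Lt CN)) (X : CN) (rhs : List (Symbol Lt CN))
    (hr : (⟨X, rhs⟩ : ContextFreeRule Lt CN) ∈ cfRules) (v : List (Symbol Lt CN))
    (h : CD (p ++ (rhs ++ q)) v) : CD (p ++ nt X :: q) v := by
  exact Relation.ReflTransGen.head ⟨_, hr, p, q, rfl, rfl⟩ h

def restF : ℕ → Bool → List (Symbol Lt CN)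
  | 0, false => [tm b, nt .B]
  | 0, true => [tm g, nt .D, tm b, nt .B]
  | i + 1, f => tm c :: nt .D :: restF i f

def kF (i : ℕ) (f : Bool) : List Lt := List.replicate i c ++ if f then [g] else []

theorem restF_derives (i : ℕ) (f : Bool) (z : List (Symbol Lt CN))
    (hz : CD [nt .B] z) : ∀ p : List (Symbol Lt CN),
    CD (p ++ nt .D :: restF i f) (p ++ ((kF i f).map tm ++ tm b :: z)) := by
  induction i with
  | zero =>
    intro p
    refine der_step p _ .D [] (by simp [cfRules]) _ ?_
    cases f with
    | false =>
      have := CD.app_left hz (p ++ [tm b])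
      simpa [kF, restF] using this
    | true =>
      have := der_step (p ++ [tm g]) [tm b, nt .B] .D [] (by simp [cfRules])
        _ (CD.app_left hz (p ++ [tm g] ++ [tm b]) |> (by simpa using ·))
      simpa [kF, restF] using this
  | succ i ih =>
    intro p
    refine der_step p _ .D [] (by simp [cfRules]) _ ?_
    have := ih (p ++ [tm c])
    simpa [kF, restF, List.replicate_succ] using this

theorem trace_cons (x : Lt) {u v : List Lt} (h : TraceEquiv J u v) :
    TraceEquiv J (x :: u) (x :: v) := by
  induction h with
  | refl => exact .refl
  | tail _ h ih =>
    refine ih.tail ?_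
    obtain ⟨p, q, hJ⟩ := h
    exact AdjSwap.swap (x :: p) q hJ

theorem trace_front (x : Lt) (hx : isBD x) (k z : List Lt) (hk : ∀ y ∈ k, isCG y) :
    TraceEquiv J (k ++ x :: z) (x :: (k ++ z)) := by
  induction k with
  | nil => exact .refl
  | cons y k ih =>
    have h1 := trace_cons y (ih (fun u hu => hk u (List.mem_cons_of_mem _ hu)))
    exact h1.tail (AdjSwap.swap [] (k ++ z) (Or.inr ⟨hk y List.mem_cons_self, hx⟩))

theorem kF_cg (i : ℕ) (f : Bool) : ∀ y ∈ kF i f, isCG y := by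
  intro y hy
  simp only [kF, List.mem_append, List.mem_replicate] at hy
  rcases hy with ⟨_, rfl⟩ | hy
  · trivial
  · cases f <;> simp at hy
    subst hy
    trivial

def repF : T1 → ℕ → Bool → List Lt → Prop
  | .x, i, f, w => ∃ v, CD (nt .D :: restF i f) (v.map tm) ∧ TraceEquiv J v w
  | .y m, i, f, w => ∃ z, CD [nt .B] (z.map tm) ∧
      TraceEquiv J (kF i f ++ (z ++ List.replicate m d)) w
  | .d m, i, f, w => TraceEquiv J (kF i f ++ List.replicate m d) w

theorem acc_rep {t i f w} (h : Acc1 t i f w) : repF t i f w := by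
  induction h with
  | done => exact .refl
  | @a i f w _ ih =>
    obtain ⟨v, h1, h2⟩ := ih
    refine ⟨a :: v, ?_, trace_cons _ h2⟩
    refine der_step [] (restF i f) .D [tm a, nt .D, tm c, nt .D] (by simp [cfRules]) _ ?_
    have := CD.app_left h1 [tm a]
    simpa [restF] using this
  | @b0 i f w _ ih =>
    obtain ⟨z, h1, h2⟩ := ih
    refine ⟨kF i f ++ b :: z, ?_, ?_⟩
    · have := restF_derives i f _ h1 []
      simpa using this
    · refine (trace_front b trivial _ z (kF_cg i f)).trans (trace_cons _ ?_)
      simpa using h2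
  | @b m i f w _ ih =>
    obtain ⟨z, h1, h2⟩ := ih
    refine ⟨b :: (z ++ [d]), ?_, ?_⟩
    · refine der_step [] [] .B [tm b, nt .B, tm d] (by simp [cfRules]) _ ?_
      have := CD.app_right
        (CD.app_left h1 [tm b]) [tm d]
      simpa using this
    · refine (trace_front b trivial (kF i f) (z ++ [d] ++ List.replicate m d)
        (kF_cg i f)).trans (trace_cons _ ?_)
      simpa [List.replicate_succ] using h2
  | @d0 m i f w _ ih =>
    refine ⟨[d], ?_, ?_⟩
    · exact der_step [] [] .B [tm d] (by simp [cfRules]) _ Relation.ReflTransGen.refl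
    · exact (trace_front d trivial _ _ (kF_cg i f)).trans (trace_cons _ ih)
  | @d m i f w _ ih =>
    exact (trace_front d trivial _ _ (kF_cg i f)).trans (trace_cons _ ih)
  | @c t i f w _ ih =>
    rcases t with _ | m | m
    · obtain ⟨v, h1, h2⟩ := ih
      refine ⟨c :: v, ?_, trace_cons _ h2⟩
      refine der_step [] (restF (i + 1) f) .D [] (by simp [cfRules]) _ ?_
      have := CD.app_left h1 [tm c]
      simpa [restF] using this
    · obtain ⟨z, h1, h2⟩ := ih
      exact ⟨z, h1, trace_cons c h2⟩
    · exact trace_cons c ih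
  | @g t w _ ih =>
    rcases t with _ | m | m
    · obtain ⟨v, h1, h2⟩ := ih
      refine ⟨g :: v, ?_, trace_cons _ h2⟩
      refine der_step [] (restF 0 true) .D [] (by simp [cfRules]) _ ?_
      have := CD.app_left h1 [tm g]
      simpa [restF] using this
    · obtain ⟨z, h1, h2⟩ := ih
      exact ⟨z, h1, trace_cons g h2⟩
    · exact trace_cons g ih

theorem trace_theL : IsTraceCFL theL := by
  refine ⟨J, ?_, ?_, cfG.language, ⟨cfG, rfl⟩, ?_⟩
  · rintro x y (⟨h1, h2⟩ | ⟨h1, h2⟩)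
    · exact Or.inr ⟨h2, h1⟩
    · exact Or.inl ⟨h2, h1⟩
  · intro x h
    cases x <;> simp [J, isBD, isCG] at h
  · ext w
    constructor
    · rintro ⟨v, hv, ht⟩
      exact theL_trace ht (cfG_sub v hv)
    · rintro ⟨w, rfl, h⟩
      obtain ⟨v, h1, h2⟩ := acc_rep h
      refine ⟨s :: v, ?_, trace_cons _ h2⟩
      refine of_cd (v := (s :: v).map tm) ?_
      refine der_step [] [] .S [tm s, nt .D, tm g, nt .D, tm b, nt .B] (by simp [cfRules]) _ ?_
      have := CD.app_left h1 [tm s]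
      simpa [restF] using this

end lang

/-- some language is in trPCCFL ∩ traceCFL but not in shuffleCFL. -/
theorem exists_trpccfl_tracecfl_not_shufflecfl :
    ∃ (α : Type) (_ : Finite α) (L : Set (List α)),
      IsTrPCCFL L ∧ IsTraceCFL L ∧ ¬ IsShuffleCFL L := by
  exact ⟨Lt, finite_Lt, theL, trpc_theL, trace_theL, notPA good_theL w0_mem⟩
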